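/- Let T be a finite tree with at least three vertices. Then the domination subdivision number of T equals 3 (i.e., sd(T) = 3) if and only if T has a unique dominating 2-packing containing all leaves of T. -/

import Mathlib

open SimpleGraph

namespace GenCorona

universe u

/-- A vertex neighborhood partition of a graph `G`: for every vertex `v`, a partition
of the open neighborhood `N_G(v)` into nonempty sets. -/
structure NbhdPartition {V : Type u} (G : SimpleGraph V) where
  part : V → Set (Set V)
  nonempty : ∀ v : V, ∀ A ∈ part v, A.Nonempty
  subset_nbhd : ∀ v : V, ∀ A ∈ part v, A ⊆ G.neighborSet v
  covers : ∀ v : V, ∀ u ∈ G.neighborSet v, ∃ A ∈ part v, u ∈ A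
  eq_of_inter : ∀ v : V, ∀ A ∈ part v, ∀ B ∈ part v, (A ∩ B).Nonempty → A = B

variable {V : Type u}

/-- The vertex type of the general corona `G ∘ 𝒫`: external vertices `(v,1)` are encoded
as `Sum.inl v`, internal vertices `(v,A)` (with `A ∈ 𝒫(v)`) as `Sum.inr ⟨(v,A), _⟩`. -/
abbrev CoronaVert (G : SimpleGraph V) (P : NbhdPartition G) : Type u :=
  V ⊕ {p : V × Set V // p.2 ∈ P.part p.1}

/-- The general corona `G ∘ 𝒫`. -/
def corona (G : SimpleGraph V) (P : NbhdPartition G) : SimpleGraph (CoronaVert G P) :=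
  SimpleGraph.fromRel fun x y =>
    match x, y with
    | Sum.inl v, Sum.inr p => v = p.val.1
    | Sum.inr p, Sum.inr q =>
        G.Adj p.val.1 q.val.1 ∧ q.val.1 ∈ p.val.2 ∧ p.val.1 ∈ q.val.2
    | _, _ => False

/-- The set of external vertices of the general corona. -/
def Ext (G : SimpleGraph V) (P : NbhdPartition G) : Set (CoronaVert G P) :=
  Set.range Sum.inl

/-- A graph is a general corona of a tree if it is isomorphic to `T ∘ 𝒫` for some finite
tree `T` and some vertex neighborhood partition `𝒫` of `T`. -/
def IsGeneralCoronaOfTree {W : Type*} (H : SimpleGraph W) : Prop :=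
  ∃ (n : ℕ) (T : SimpleGraph (Fin n)) (P : NbhdPartition T),
    T.IsTree ∧ Nonempty (H ≃g corona T P)

/-- A graph `H` is a general corona of a tree with external vertex set `E`. -/
def IsGenCoronaWithExt {W : Type*} (H : SimpleGraph W) (E : Set W) : Prop :=
  ∃ (n : ℕ) (T : SimpleGraph (Fin n)) (P : NbhdPartition T),
    T.IsTree ∧ ∃ f : H ≃g corona T P, E = ⇑f ⁻¹' Ext T P

/-- `D` is a dominating set of `G`. -/
def IsDominating (G : SimpleGraph V) (D : Set V) : Prop :=
  ∀ v ∉ D, ∃ u ∈ D, G.Adj v u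

/-- `S` is a 2-packing of `G`: any two distinct vertices of `S` are at distance
greater than 2 (where the extended distance of unreachable vertices is `⊤`). -/
def Is2Packing (G : SimpleGraph V) (S : Set V) : Prop :=
  ∀ u ∈ S, ∀ v ∈ S, u ≠ v → 2 < G.edist u v

/-- A leaf is a vertex of degree 1, i.e. with exactly one neighbor. -/
def IsLeaf (G : SimpleGraph V) (v : V) : Prop :=
  (G.neighborSet v).ncard = 1

/-- The domination number: the minimum size of a dominating set. -/
noncomputable def dominationNumber (G : SimpleGraph V) : ℕ :=
  sInf {n : ℕ | ∃ D : Set V, IsDominating G D ∧ D.ncard = n}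

/-- The graph obtained from `G` by subdividing every edge in `F` (each once):
for each `e ∈ F` a new vertex `Sum.inr e` replaces the edge `e` by a path of length two. -/
def subdivide (G : SimpleGraph V) (F : Set (Sym2 V)) : SimpleGraph (V ⊕ F) :=
  SimpleGraph.fromRel fun x y =>
    match x, y with
    | Sum.inl u, Sum.inl v => G.Adj u v ∧ s(u, v) ∉ F
    | Sum.inl u, Sum.inr e => u ∈ e.val
    | _, _ => False

/-- The domination subdivision number `sd(G)`: the minimum number of edges which must be
subdivided (each edge at most once) in order to increase the domination number. -/
noncomputable def sd (G : SimpleGraph V) : ℕ :=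
  sInf {k : ℕ | ∃ F : Set (Sym2 V), F ⊆ G.edgeSet ∧ F.ncard = k ∧
    dominationNumber G < dominationNumber (subdivide G F)}

/-- The corona `G ∘ K₁`: attach one new pendant vertex `Sum.inr v` to each vertex
`Sum.inl v` of `G`. -/
def coronaK1 (G : SimpleGraph V) : SimpleGraph (V ⊕ V) :=
  SimpleGraph.fromRel fun x y =>
    match x, y with
    | Sum.inl u, Sum.inl w => G.Adj u w
    | Sum.inl u, Sum.inr w => u = w
    | _, _ => False

/-- The 2-subdivision `S₂(G)`: every edge `uv` is replaced by a path `(u, x₁, x₂, v)`;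
the new vertex `Sum.inr ⟨(u,v), _⟩` is the subdivision vertex adjacent to `u`. -/
def twoSubdivision (G : SimpleGraph V) : SimpleGraph (V ⊕ {p : V × V // G.Adj p.1 p.2}) :=
  SimpleGraph.fromRel fun x y =>
    match x, y with
    | Sum.inl u, Sum.inr p => u = p.val.1
    | Sum.inr p, Sum.inr q => p.val.1 = q.val.2 ∧ p.val.2 = q.val.1
    | _, _ => False

/-- `𝒫'` is a refinement of `𝒫`. -/
def Refines {G : SimpleGraph V} (P' P : NbhdPartition G) : Prop :=
  ∀ v : V, ∀ A ∈ P'.part v, ∃ B ∈ P.part v, A ⊆ B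

/-- The graph obtained by contracting the two vertices `x` and `y` of `G` to the single
vertex `x` (the vertex `y` is removed, and `x` becomes adjacent to all former
neighbors of `y`). -/
def contractPair {W : Type*} (G : SimpleGraph W) (x y : W) :
    SimpleGraph {w : W // w ≠ y} :=
  SimpleGraph.fromRel fun a b =>
    G.Adj a.val b.val ∨ (a.val = x ∧ G.Adj y b.val) ∨ (b.val = x ∧ G.Adj a.val y)

/-- The graph obtained from `G` by attaching a path `(x, y, z)` (encoded as
`Sum.inr 0, Sum.inr 1, Sum.inr 2`) to the vertex `v` via the edge `v x`. -/
def attachPath3 {W : Type*} (G : SimpleGraph W) (v : W) : SimpleGraph (W ⊕ Fin 3) :=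
  SimpleGraph.fromRel fun a b =>
    match a, b with
    | Sum.inl u, Sum.inl w => G.Adj u w
    | Sum.inl u, Sum.inr i => u = v ∧ i = 0
    | Sum.inr i, Sum.inr j => (i = 0 ∧ j = 1) ∨ (i = 1 ∧ j = 2)
    | _, _ => False

/-- The graph obtained from `G` by attaching a path `(x, y)` (encoded as
`Sum.inr 0, Sum.inr 1`) to the vertex `v` via the edge `v x`. -/
def attachPath2 {W : Type*} (G : SimpleGraph W) (v : W) : SimpleGraph (W ⊕ Fin 2) :=
  SimpleGraph.fromRel fun a b =>
    match a, b with
    | Sum.inl u, Sum.inl w => G.Adj u w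
    | Sum.inl u, Sum.inr i => u = v ∧ i = 0
    | Sum.inr i, Sum.inr j => i = 0 ∧ j = 1
    | _, _ => False

/-- The family `𝓕` of labeled trees; the label of a vertex is `A` when it belongs to the
distinguished set `L`, and `B` otherwise.  The family contains the labeled path `P₄`
(leaves labeled `A`, support vertices labeled `B`) and is closed under the two
attachment operations. -/
inductive LabF : ∀ {W : Type}, SimpleGraph W → Set W → Prop where
  | base : LabF (SimpleGraph.pathGraph 4) ({0, 3} : Set (Fin 4))
  | opA {W : Type} {G : SimpleGraph W} {L : Set W} (v : W) :
      LabF G L → v ∈ L →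
        LabF (attachPath3 G v) (Sum.inl '' L ∪ {Sum.inr (2 : Fin 3)})
  | opB {W : Type} {G : SimpleGraph W} {L : Set W} (v : W) :
      LabF G L → v ∉ L →
        LabF (attachPath2 G v) (Sum.inl '' L ∪ {Sum.inr (1 : Fin 2)})

/-- A tree `T` belongs to the family `𝓕` if it admits a labeling constructed by the
above rules, i.e. it is isomorphic to a member of the inductively generated family. -/
def MemF {W : Type*} (T : SimpleGraph W) : Prop :=
  ∃ (W' : Type) (G : SimpleGraph W') (L : Set W'), LabF G L ∧ Nonempty (T ≃g G)

/-- The tree `G` is rooted at its edge `uv`: `par` maps every vertex to its parent, where `u` and `v`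
are parents of each other, and `depth` decreases towards `v`. -/
structure IsEdgeRooting (G : SimpleGraph V) (u v : V) (par : V → V) (depth : V → ℕ) : Prop where
  par_left : par u = v
  par_right : par v = u
  adj_iff : ∀ a b, G.Adj a b ↔ par a = b ∨ par b = a
  depth_lt : ∀ a, a ≠ v → depth (par a) < depth a

namespace IsEdgeRooting

variable {G : SimpleGraph V} {u v : V} {par : V → V} {depth : V → ℕ}

lemma adj_par (h : IsEdgeRooting G u v par depth) (a : V) : G.Adj a (par a) :=
  (h.adj_iff _ _).2 (Or.inl rfl)

lemma par_eq_of_adj (h : IsEdgeRooting G u v par depth) {a b : V} (hab : G.Adj a b)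
    (hne : a ≠ par b) : par a = b :=
  ((h.adj_iff _ _).1 hab).resolve_right (Ne.symm hne)

lemma eq_or_eq_of_par_par (h : IsEdgeRooting G u v par depth) {a : V} (ha : par (par a) = a) :
    a = u ∨ a = v := by
  by_contra! hne
  have hv : par a ≠ v := fun hv => hne.1 (by rw [← ha, hv, h.par_right])
  have h1 := h.depth_lt a hne.2
  have h2 := h.depth_lt (par a) hv
  rw [ha] at h2
  omega

/-- A rooting orders the darts of a finite tree so that every dart `(a, b)` comes after the darts
`(c, a)` with `c ≠ b`. -/
lemma exists_dart_rank [Finite V] (h : IsEdgeRooting G u v par depth) :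
    ∃ rank : V → V → ℕ, ∀ a b c, G.Adj a b → G.Adj c a → c ≠ b → rank c a < rank a b := by
  classical
  obtain ⟨M, hM⟩ := (Set.finite_range depth).bddAbove
  have hM' : ∀ a, depth a ≤ M := fun a => hM ⟨a, rfl⟩
  refine ⟨fun a b => if par a = b ∧ a ≠ v then M - depth a else M + 1 + depth a, ?_⟩
  intro a b c hab hca hcb
  have h1 := hM' a
  have h2 := hM' c
  have h3 := h.depth_lt a
  have h4 := h.depth_lt c
  have h5 := h.par_left
  have h6 := h.par_right
  have h7 := (h.adj_iff _ _).1 hab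
  have h8 := (h.adj_iff _ _).1 hca
  have h9 := hca.ne
  dsimp only
  split_ifs <;> grind

end IsEdgeRooting

lemma exists_isEdgeRooting {G : SimpleGraph V} (hG : G.IsTree) {u v : V} (huv : G.Adj u v) :
    ∃ par depth, IsEdgeRooting G u v par depth := by
  classical
  have hstep : ∀ a, a ≠ v → ∃ b, G.Adj a b ∧ G.dist b v < G.dist a v := by
    intro a ha
    obtain ⟨w, hw⟩ := hG.connected.exists_walk_length_eq_dist a v
    cases w with
    | nil => exact absurd rfl ha
    | cons hab w' =>
      refine ⟨_, hab, ?_⟩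
      have := dist_le w'
      simp only [Walk.length_cons] at hw
      omega
  have huniq : ∀ a b c, G.Adj a b → G.Adj a c → G.dist b v < G.dist a v →
      G.dist c v < G.dist a v → b = c := by
    have key : ∀ a b, G.Adj a b → G.dist b v < G.dist a v →
        ∃ w : G.Walk a v, w.IsPath ∧ w.snd = b := by
      intro a b hab hlt
      obtain ⟨w, hw⟩ := hG.connected.exists_walk_length_eq_dist b v
      refine ⟨Walk.cons hab w, Walk.isPath_of_length_eq_dist _ ?_, by simp⟩
      have := dist_le (Walk.cons hab w)
      simp only [Walk.length_cons] at this ⊢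
      omega
    intro a b c hab hac hb hc
    obtain ⟨p, hp, rfl⟩ := key a b hab hb
    obtain ⟨q, hq, rfl⟩ := key a c hac hc
    rw [(hG.existsUnique_path a v).unique hp hq]
  choose! f hf using hstep
  refine ⟨fun a => if a = v then u else f a, fun a => G.dist a v, ?_, ?_, ?_, ?_⟩
  · have := hf u huv.ne
    simp only [huv.ne, if_false]
    refine huniq u _ _ this.1 huv this.2 ?_
    simpa using (hG.connected.pos_dist_of_ne huv.ne)
  · simp
  · have hfu : f u = v := by
      refine huniq u _ _ (hf u huv.ne).1 huv (hf u huv.ne).2 ?_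
      simpa using (hG.connected.pos_dist_of_ne huv.ne)
    intro a b
    constructor
    · intro hab
      have aux : ∀ a b, G.Adj a b → G.dist b v < G.dist a v →
          (if a = v then u else f a) = b := by
        intro a b hab hlt
        have ha : a ≠ v := by rintro rfl; simp at hlt
        rw [if_neg ha]
        exact huniq a _ _ (hf a ha).1 hab (hf a ha).2 hlt
      have := hG.dist_eq_dist_add_one_of_adj v hab
      rw [dist_comm, dist_comm (u := v) (v := b)] at this
      rcases this with h | h
      · exact Or.inl (aux a b hab (by omega))
      · exact Or.inr (aux b a hab.symm (by omega))
    · have aux : ∀ a, G.Adj a (if a = v then u else f a) := by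
        intro a
        split_ifs with ha
        · exact ha ▸ huv.symm
        · exact (hf a ha).1
      rintro (rfl | rfl)
      · exact aux a
      · exact (aux b).symm
  · intro a ha
    simpa [ha] using (hf a ha).2

/-- Induction over the darts of a finite tree, from the leaves inwards. -/
lemma dart_induction [Finite V] {G : SimpleGraph V} (hG : G.IsTree) {P : V → V → Prop}
    (step : ∀ a b, G.Adj a b → (∀ c, G.Adj c a → c ≠ b → P c a) → P a b) :
    ∀ a b, G.Adj a b → P a b := by
  intro a b hab
  obtain ⟨par, depth, h⟩ := exists_isEdgeRooting hG hab
  obtain ⟨rank, hrank⟩ := h.exists_dart_rank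
  clear h
  induction hn : rank a b using Nat.strong_induction_on generalizing a b with
  | _ n ih =>
    subst hn
    exact step a b hab fun c hca hcb => ih _ (hrank a b c hab hca hcb) c a hca rfl

/-- The states of a branch of a tree with respect to minimum dominating sets. With `k` the least
number of vertices dominating everything except possibly the root of the branch, `k` vertices can
contain the root and dominate the branch (`free`), can dominate the branch but not contain the root
(`covered`), or cannot dominate the branch (`deficient`). -/
inductive BranchState
  | free
  | covered
  | deficient

open BranchState

/-- `t a b` is the state of the branch rooted at `a` that remains after deleting the edge `ab`. -/
structure IsBranchLabeling (G : SimpleGraph V) (t : V → V → BranchState) : Prop where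
  free_iff : ∀ a b, G.Adj a b → (t a b = free ↔ ∃ c, G.Adj c a ∧ c ≠ b ∧ t c a = deficient)
  deficient_iff : ∀ a b, G.Adj a b →
    (t a b = deficient ↔ ∀ c, G.Adj c a → c ≠ b → t c a = covered)

lemma exists_isBranchLabeling [Finite V] {G : SimpleGraph V} (hG : G.IsTree) {u v : V}
    (huv : G.Adj u v) : ∃ t, IsBranchLabeling G t := by
  classical
  obtain ⟨par, depth, h⟩ := exists_isEdgeRooting hG huv
  obtain ⟨rank, hrank⟩ := h.exists_dart_rank
  let r : V × V → V × V → Prop := fun p q =>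
    p.2 = q.1 ∧ p.1 ≠ q.2 ∧ G.Adj p.1 q.1 ∧ G.Adj q.1 q.2
  have hr : WellFounded r := by
    refine Subrelation.wf ?_ (InvImage.wf (fun p : V × V => rank p.1 p.2) Nat.lt_wfRel.wf)
    rintro ⟨a, b⟩ ⟨c, d⟩ ⟨h1, h2, h3, h4⟩
    dsimp only at h1 h2 h3 h4
    subst h1
    exact hrank _ _ _ h4 h3 h2
  let F : ∀ p : V × V, (∀ q, r q p → BranchState) → BranchState := fun p rec =>
    if ∃ q, ∃ hq : r q p, rec q hq = deficient then free
    else if ∀ q, ∀ hq : r q p, rec q hq = covered then deficient else covered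
  let t : V × V → BranchState := hr.fix F
  have ht : ∀ p, t p = F p fun q _ => t q := fun p => hr.fix_eq F p
  refine ⟨fun a b => t (a, b), fun a b hab => ?_, fun a b hab => ?_⟩
  · rw [ht]
    simp only [F]
    constructor
    · intro h
      split_ifs at h with h1
      obtain ⟨⟨c, d⟩, ⟨h2, h3, h4, h5⟩, h6⟩ := h1
      dsimp only at h2 h3 h4
      subst h2
      exact ⟨c, h4, h3, h6⟩
    · rintro ⟨c, h1, h2, h3⟩
      exact if_pos ⟨(c, a), ⟨rfl, h2, h1, hab⟩, h3⟩
  · rw [ht]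
    simp only [F]
    constructor
    · intro h c h1 h2
      split_ifs at h with h3 h4
      exact h4 (c, a) ⟨rfl, h2, h1, hab⟩
    · intro h
      have h1 : ∀ q, r q (a, b) → t q = covered := by
        rintro ⟨c, d⟩ ⟨h2, h3, h4, h5⟩
        dsimp only at h2 h3 h4
        subst h2
        exact h c h4 h3
      rw [if_neg, if_pos h1]
      rintro ⟨q, hq, h2⟩
      rw [h1 q hq] at h2
      cases h2

lemma dominationNumber_le {W : Type*} {G : SimpleGraph W} {D : Set W} (hD : IsDominating G D) :
    dominationNumber G ≤ D.ncard :=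
  Nat.sInf_le ⟨D, hD, rfl⟩

lemma exists_isDominating_ncard_eq {W : Type*} (G : SimpleGraph W) :
    ∃ D, IsDominating G D ∧ D.ncard = dominationNumber G :=
  Nat.sInf_mem (s := {n : ℕ | ∃ D : Set W, IsDominating G D ∧ D.ncard = n})
    ⟨_, Set.univ, fun v hv => absurd (Set.mem_univ v) hv, rfl⟩

/-- If every element of `A` owns the whole closed neighborhood of some vertex, then the domination
number is at least the size of `A`. -/
lemma ncard_le_dominationNumber {W α : Type*} [Finite W] {G : SimpleGraph W} (owner : W → α)
    {A : Set α} (hA : ∀ a ∈ A, ∃ p, owner p = a ∧ ∀ q, G.Adj p q → owner q = a) :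
    A.ncard ≤ dominationNumber G := by
  obtain ⟨D, hD, hcard⟩ := exists_isDominating_ncard_eq G
  rw [← hcard]
  refine (Set.ncard_le_ncard (t := owner '' D) ?_ (Set.toFinite _)).trans
    (Set.ncard_image_le (Set.toFinite _))
  intro a ha
  obtain ⟨p, hp, hq⟩ := hA a ha
  by_cases hpD : p ∈ D
  · exact ⟨p, hpD, hp⟩
  · obtain ⟨q, hqD, hpq⟩ := hD p hpD
    exact ⟨q, hqD, hq q hpq⟩

section subdivide

variable {G : SimpleGraph V} {F : Set (Sym2 V)}

@[simp] lemma subdivide_adj_inl_inl {a b : V} :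
    (subdivide G F).Adj (Sum.inl a) (Sum.inl b) ↔ G.Adj a b ∧ s(a, b) ∉ F := by
  simp only [subdivide, fromRel_adj, ne_eq, Sum.inl.injEq, G.adj_comm b a, Sym2.eq_swap (a := b),
    or_self]
  exact ⟨fun h => h.2, fun h => ⟨h.1.ne, h⟩⟩

@[simp] lemma subdivide_adj_inl_inr {a : V} {e : F} :
    (subdivide G F).Adj (Sum.inl a) (Sum.inr e) ↔ a ∈ e.val := by
  simp [subdivide]

@[simp] lemma subdivide_adj_inr_inl {a : V} {e : F} :
    (subdivide G F).Adj (Sum.inr e) (Sum.inl a) ↔ a ∈ e.val := by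
  simp [subdivide]

@[simp] lemma not_subdivide_adj_inr_inr {e f : F} :
    ¬ (subdivide G F).Adj (Sum.inr e) (Sum.inr f) := by
  simp [subdivide]

lemma dominationNumber_subdivide_mono [Finite V] {F' : Set (Sym2 V)} (hF : F ⊆ F')
    (hF' : F' ⊆ G.edgeSet) :
    dominationNumber (subdivide G F) ≤ dominationNumber (subdivide G F') := by
  classical
  obtain ⟨D, hD, hcard⟩ := exists_isDominating_ncard_eq (subdivide G F')
  let φ : V ⊕ F' → V ⊕ F := Sum.elim Sum.inl fun g =>
    if hg : g.val ∈ F then Sum.inr ⟨g, hg⟩ else Sum.inl g.val.out.1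
  rw [← hcard]
  refine (dominationNumber_le ?_).trans (Set.ncard_image_le (f := φ) (Set.toFinite D))
  rintro (a | e) hx
  · obtain ⟨b | g, hyD, hadj⟩ := hD (Sum.inl a) fun h => hx ⟨_, h, rfl⟩
    · rw [subdivide_adj_inl_inl] at hadj
      exact ⟨_, ⟨_, hyD, rfl⟩, subdivide_adj_inl_inl.2 ⟨hadj.1, fun h => hadj.2 (hF h)⟩⟩
    · rw [subdivide_adj_inl_inr] at hadj
      refine ⟨_, ⟨_, hyD, rfl⟩, ?_⟩
      by_cases hg : g.val ∈ F
      · simpa [φ, hg] using hadj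
      · have hout : φ (Sum.inr g) = Sum.inl g.val.out.1 := by simp [φ, hg]
        have hne : a ≠ g.val.out.1 := by
          rintro rfl
          exact hx ⟨_, hyD, hout⟩
        have hval : s(a, g.val.out.1) = g.val :=
          ((Sym2.mem_and_mem_iff hne).1 ⟨hadj, Sym2.out_fst_mem _⟩).symm
        rw [hout, subdivide_adj_inl_inl, ← mem_edgeSet, hval]
        exact ⟨hF' g.2, hg⟩
  · obtain ⟨b | g, hyD, hadj⟩ := hD (Sum.inr ⟨e, hF e.2⟩) fun h => hx ⟨_, h, by simp [φ]⟩
    · exact ⟨_, ⟨_, hyD, rfl⟩, by simpa [φ] using hadj⟩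
    · exact absurd hadj not_subdivide_adj_inr_inr

end subdivide

/-- An edge whose two branches are not both free, and which is dominated by a free end or has two
covered ends, witnesses that two subdivisions raise the domination number. -/
lemma IsBranchLabeling.exists_subdivide_lt [Finite V] {G : SimpleGraph V} (hG : G.IsTree)
    {t : V → V → BranchState} (ht : IsBranchLabeling G t) {u v : V} (huv : G.Adj u v)
    (hv : t v u ≠ free) (hu : t u v = free ∨ t u v = covered ∧ t v u = covered) :
    ∃ F ⊆ G.edgeSet, F.ncard ≤ 2 ∧ dominationNumber G < dominationNumber (subdivide G F) := by
  classical
  obtain ⟨par, depth, h⟩ := exists_isEdgeRooting hG huv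
  set l : V → BranchState := fun z => t z (par z) with hl
  have hlu : l u = t u v := by simp only [hl, h.par_left]
  have hlv : l v = t v u := by simp only [hl, h.par_right]
  have hfree : ∀ z, l z = free ↔ ∃ c, par c = z ∧ c ≠ par z ∧ l c = deficient := by
    intro z
    simp only [hl]
    rw [ht.free_iff z _ (h.adj_par z)]
    constructor
    · rintro ⟨c, h1, h2, h3⟩
      have h4 := h.par_eq_of_adj h1 h2
      exact ⟨c, h4, h2, h4 ▸ h3⟩
    · rintro ⟨c, rfl, h2, h3⟩
      exact ⟨c, h.adj_par c, h2, h3⟩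
  have hdef : ∀ z, l z = deficient ↔ ∀ c, par c = z → c ≠ par z → l c = covered := by
    intro z
    simp only [hl]
    rw [ht.deficient_iff z _ (h.adj_par z)]
    constructor
    · rintro h1 c rfl h2
      exact h1 c (h.adj_par c) h2
    · intro h1 c h2 h3
      have h4 := h.par_eq_of_adj h2 h3
      have h5 := h1 c h4 h3
      rwa [h4] at h5
  have hc : ∀ z, ∃ c, G.Adj z c ∧ (l z ≠ free → c = par z) ∧
      (l z = free → par c = z ∧ c ≠ par z ∧ l c = deficient) := by
    intro z
    by_cases hz : l z = free
    · obtain ⟨c, h1, h2, h3⟩ := (hfree z).1 hz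
      exact ⟨c, (h.adj_iff _ _).2 (Or.inr h1), fun h4 => absurd hz h4, fun _ => ⟨h1, h2, h3⟩⟩
    · exact ⟨par z, h.adj_par z, fun _ => rfl, fun h1 => absurd h1 hz⟩
  choose c hadj hcpar hc using hc
  have hdom : IsDominating G {z | l z = free} := by
    intro z hz
    cases hlz : l z with
    | free => exact absurd hlz hz
    | covered =>
      by_contra! hno
      have : l z = deficient := by
        rw [hdef]
        rintro w rfl hw
        cases hlw : l w with
        | free => exact absurd (h.adj_par w).symm (hno w hlw)
        | covered => rfl
        | deficient => exact absurd ((hfree _).2 ⟨w, rfl, hw, hlw⟩) hz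
      rw [hlz] at this
      cases this
    | deficient =>
      refine ⟨par z, ?_, h.adj_par z⟩
      by_cases hpp : par (par z) = z
      · rcases h.eq_or_eq_of_par_par hpp with rfl | rfl <;> grind [h.par_left, h.par_right]
      · exact (hfree _).2 ⟨z, rfl, fun h1 => hpp h1.symm, hlz⟩
  set F : Set (Sym2 V) := {s(u, v), s(u, c u)} with hF
  refine ⟨F, ?_, (Set.ncard_insert_le _ _).trans (by simp), (dominationNumber_le hdom).trans_lt ?_⟩
  · rintro e (rfl | rfl)
    · exact huv
    · exact hadj u
  let owner : V ⊕ F → Option V := Sum.elim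
    (fun y => if y = u ∨ y = v then none else
      match l y with
      | free => some (c y)
      | covered => some (par y)
      | deficient => some y)
    (fun e => if e.val = s(u, v) then none else some (c u))
  have hcard :
      (insert none (some '' (c '' {z | l z = free}))).ncard = {z | l z = free}.ncard + 1 := by
    rw [Set.ncard_insert_of_notMem (by simp) (Set.toFinite _),
      Set.ncard_image_of_injective _ (Option.some_injective V), Set.InjOn.ncard_image]
    intro a ha b hb hab
    rw [← (hc a ha).1, ← (hc b hb).1, hab]
  rw [← Nat.add_one_le_iff, ← hcard]
  refine ncard_le_dominationNumber owner ?_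
  rintro _ (rfl | ⟨_, ⟨z, hz, rfl⟩, rfl⟩)
  · refine ⟨Sum.inr ⟨s(u, v), by simp [hF]⟩, by simp [owner], ?_⟩
    rintro (q | e) hq
    · simp only [subdivide_adj_inr_inl, Sym2.mem_iff] at hq
      simp [owner, hq]
    · exact absurd hq not_subdivide_adj_inr_inr
  · obtain ⟨h1, h2, h3⟩ := hc z hz
    have hzv : z ≠ v := by
      rintro rfl
      exact hv (hlv ▸ hz)
    have hcu : c z ≠ u := by
      intro hcz
      rw [hcz, h.par_left] at h1
      exact hzv h1.symm
    have hcv : c z ≠ v := by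
      intro hcz
      rw [hcz, h.par_right] at h1
      exact h2 (by rw [hcz, ← h1, h.par_left])
    refine ⟨Sum.inl (c z), by simp [owner, hcu, hcv, h3], ?_⟩
    rintro (q | ⟨e, rfl | rfl⟩) hq
    · rw [subdivide_adj_inl_inl] at hq
      by_cases hqz : q = par (c z)
      · rw [h1] at hqz
        subst hqz
        have hqu : q ≠ u := by
          rintro rfl
          exact hq.2 (by simp [hF, Sym2.eq_swap])
        have hz' : l q = free := hz
        simp [owner, hqu, hzv, hz']
      · have h4 := h.par_eq_of_adj hq.1.symm hqz
        have h5 := (hdef _).1 h3 q h4 hqz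
        have hqu : q ≠ u := by
          rintro rfl
          exact hcv (by rw [← h4, h.par_left])
        have hqv : q ≠ v := by
          rintro rfl
          exact hcu (by rw [← h4, h.par_right])
        simp [owner, hqu, hqv, h5, h4]
    · simp [hcu, hcv] at hq
    · simp only [subdivide_adj_inl_inr, Sym2.mem_iff, hcu, false_or] at hq
      have hzu : z = u := by
        have hlu : l u = free := by
          by_contra hne
          exact hcv (by rw [hq, hcpar u hne, h.par_left])
        rw [← h1, hq, (hc u hlu).1]
      subst hzu
      have : c z ≠ v := hcv
      simp [owner, this, hzv, hadj z |>.ne']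

/-- Every closed neighborhood contains exactly one element of `S`. -/
structure IsPerfectCode (G : SimpleGraph V) (S : Set V) : Prop where
  indep : ∀ a ∈ S, ∀ b ∈ S, ¬ G.Adj a b
  exists_adj : ∀ b ∉ S, ∃ s ∈ S, G.Adj b s
  eq_of_adj : ∀ b, ∀ s ∈ S, ∀ s' ∈ S, G.Adj b s → G.Adj b s' → s = s'

lemma isPerfectCode_iff {G : SimpleGraph V} {S : Set V} :
    IsPerfectCode G S ↔ IsDominating G S ∧ Is2Packing G S := by
  simp only [Is2Packing, two_lt_edist_iff]
  constructor
  · intro h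
    refine ⟨h.exists_adj, fun a ha b hb hab => ⟨hab, h.indep a ha b hb, ?_⟩⟩
    refine Set.eq_empty_of_forall_notMem fun c hc => hab ?_
    rw [mem_commonNeighbors] at hc
    exact h.eq_of_adj c a ha b hb hc.1.symm hc.2.symm
  · rintro ⟨hd, hp⟩
    refine ⟨fun a ha b hb hab => (hp a ha b hb hab.ne).2.1 hab, hd, ?_⟩
    intro b s hs s' hs' h h'
    by_contra hne
    have hmem : b ∈ G.commonNeighbors s s' := ⟨h.symm, h'.symm⟩
    rw [(hp s hs s' hs' hne).2.2] at hmem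
    exact hmem

lemma forall_isLeaf_mem_iff {G : SimpleGraph V} {S : Set V} :
    (∀ v, IsLeaf G v → v ∈ S) ↔ ∀ b ∉ S, ∀ a, G.Adj b a → ∃ c, c ≠ a ∧ G.Adj b c := by
  simp only [IsLeaf, Set.ncard_eq_one]
  constructor
  · intro h b hb a hab
    by_contra! hno
    refine hb (h b ⟨a, Set.ext fun c => ⟨fun hc => ?_, fun hc => ?_⟩⟩)
    · by_contra hca
      exact hno c hca hc
    · rw [Set.mem_singleton_iff] at hc
      exact hc ▸ hab
  · rintro h b ⟨a, ha⟩
    by_contra hb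
    have hmem : ∀ c, G.Adj b c ↔ c = a := fun c => by
      rw [← mem_neighborSet, ha, Set.mem_singleton_iff]
    obtain ⟨c, hca, hbc⟩ := h b hb a ((hmem a).2 rfl)
    exact hca ((hmem c).1 hbc)

lemma exists_adj_ne_of_three_le_card [Fintype V] {G : SimpleGraph V} (hG : G.Connected)
    (h3 : 3 ≤ Fintype.card V) {u v : V} (huv : G.Adj u v) :
    ∃ w, w ≠ u ∧ w ≠ v ∧ (G.Adj w u ∨ G.Adj w v) := by
  classical
  by_contra! hno
  have hall : ∀ w, w = u ∨ w = v := by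
    intro w
    obtain ⟨p⟩ := hG.preconnected w u
    induction p with
    | nil => exact Or.inl rfl
    | @cons a b c hab p ih =>
      by_contra! hw
      rcases ih huv hno with rfl | rfl
      · exact (hno a hw.1 hw.2).1 hab
      · exact (hno a hw.1 hw.2).2 hab
  have hsub : (Finset.univ : Finset V) ⊆ {u, v} := fun w _ => by simpa using hall w
  have h1 := Finset.card_le_card hsub
  have h2 := Finset.card_le_two (a := u) (b := v)
  rw [Finset.card_univ] at h1
  omega

/-- If subdividing at most two edges of a tree never raises its domination number, then the tree has
a perfect code containing all leaves. -/
lemma exists_isPerfectCode [Fintype V] {G : SimpleGraph V} (hG : G.IsTree)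
    (h3 : 3 ≤ Fintype.card V)
    (hsub : ∀ F ⊆ G.edgeSet, F.ncard ≤ 2 →
      dominationNumber (subdivide G F) ≤ dominationNumber G) :
    ∃ S, IsPerfectCode G S ∧ ∀ v, IsLeaf G v → v ∈ S := by
  have : Nontrivial V := Fintype.one_lt_card_iff_nontrivial.1 (by omega)
  have hnbr : ∀ v, ∃ w, G.Adj v w := fun v => hG.connected.preconnected.exists_adj_of_nontrivial v
  obtain ⟨u₀, v₀, huv₀⟩ : ∃ u v, G.Adj u v := ⟨Classical.arbitrary V, hnbr _⟩
  obtain ⟨t, ht⟩ := exists_isBranchLabeling hG huv₀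
  have hbad : ∀ u v, G.Adj u v → t v u ≠ free →
      ¬ (t u v = free ∨ t u v = covered ∧ t v u = covered) := by
    intro u v huv hv hu
    obtain ⟨F, hF, hcard, hlt⟩ := ht.exists_subdivide_lt hG huv hv hu
    exact (hsub F hF hcard).not_gt hlt
  have hnn : ∀ u v, G.Adj u v → t u v = deficient → t v u = deficient → False := by
    have key : ∀ u v w, G.Adj u v → t u v = deficient → t v u = deficient → G.Adj w u →
        w ≠ v → False := by
      intro u v w huv hu hv hwu hwv
      have hw : t w u = covered := (ht.deficient_iff u v huv).1 hu w hwu hwv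
      have huw : t u w = free := (ht.free_iff u w hwu.symm).2 ⟨v, huv.symm, hwv.symm, hv⟩
      exact hbad u w hwu.symm (by simp [hw]) (Or.inl huw)
    intro u v huv hu hv
    obtain ⟨w, hwu, hwv, h | h⟩ := exists_adj_ne_of_three_le_card hG.connected h3 huv
    · exact key u v w huv hu hv h hwv
    · exact key v u w huv.symm hv hu h hwu
  have hpair : ∀ u v, G.Adj u v → (t u v = free ∧ t v u = free) ∨
      (t u v = covered ∧ t v u = deficient) ∨ (t u v = deficient ∧ t v u = covered) := by
    intro u v huv
    have h1 := hbad u v huv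
    have h2 := hbad v u huv.symm
    have h4 := hnn u v huv
    cases hu : t u v <;> cases hv : t v u <;> simp_all
  set S : Set V := {v | ∀ w, G.Adj w v → t w v = covered} with hS
  have hmem : ∀ u v, G.Adj u v → (u ∈ S ↔ t u v = deficient) := by
    intro u v huv
    constructor
    · intro hu
      have h1 := hu v huv.symm
      rcases hpair u v huv with h | h | h
      · simp [h1] at h
      · simp [h1] at h
      · exact h.1
    · intro hu w hwu
      by_cases hwv : w = v
      · subst hwv
        rcases hpair u w huv with h | h | h
        · simp [hu] at h
        · simp [hu] at h
        · exact h.2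
      · exact (ht.deficient_iff u v huv).1 hu w hwu hwv
  have hunique : ∀ b, ∀ s ∈ S, ∀ s' ∈ S, G.Adj b s → G.Adj b s' → s = s' := by
    intro b s hs s' hs' h h'
    by_contra hne
    have h1 := (hmem s b h.symm).1 hs
    have h2 := (ht.free_iff b s' h').2 ⟨s, h.symm, hne, h1⟩
    have h4 := hs' b h'
    rw [h2] at h4
    cases h4
  have hinner : ∀ b ∉ S, ∀ a, G.Adj b a → ∃ c, c ≠ a ∧ G.Adj b c := by
    intro b hb a hab
    by_contra! hno
    exact hb ((hmem b a hab).2 ((ht.deficient_iff b a hab).2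
      fun c hcb hca => absurd hcb.symm (hno c hca)))
  refine ⟨S, ⟨?_, ?_, hunique⟩, forall_isLeaf_mem_iff.2 hinner⟩
  · intro a ha b hb hab
    have h1 := (hmem a b hab).1 ha
    rw [hb a hab] at h1
    cases h1
  · intro b hb
    by_contra! hno
    have hfree : ∀ a, G.Adj b a → t b a = free ∧ t a b = free := by
      intro a hab
      rcases hpair b a hab with h | h | h
      · exact h
      · exact absurd hab (hno a ((hmem a b hab.symm).2 h.2))
      · exact absurd ((hmem b a hab).2 h.1) hb
    obtain ⟨a, hab⟩ := hnbr b
    obtain ⟨c, hcb, hca, hc⟩ := (ht.free_iff b a hab).1 (hfree a hab).1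
    rw [(hfree c hcb.symm).2] at hc
    cases hc

lemma IsPerfectCode.eq_of_forall_isLeaf_mem [Finite V] [Nontrivial V] {G : SimpleGraph V}
    (hG : G.IsTree) {S S' : Set V} (hS : IsPerfectCode G S) (hS' : IsPerfectCode G S')
    (hl : ∀ v, IsLeaf G v → v ∈ S) (hl' : ∀ v, IsLeaf G v → v ∈ S') : S = S' := by
  have hl := forall_isLeaf_mem_iff.1 hl
  have hl' := forall_isLeaf_mem_iff.1 hl'
  have hnbr : ∀ v, ∃ w, G.Adj v w := fun v => hG.connected.preconnected.exists_adj_of_nontrivial v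
  have key : ∀ a b, G.Adj a b → (a ∈ S ↔ a ∈ S') ∧ (b ∈ S ↔ b ∈ S') := by
    refine dart_induction hG fun a b hab ih => ?_
    have ha : a ∈ S ↔ a ∈ S' := by
      by_cases hc : ∃ c, c ≠ b ∧ G.Adj a c
      · obtain ⟨c, hcb, hac⟩ := hc
        exact (ih c hac.symm hcb).2
      · exact iff_of_true (by_contra fun h => hc (hl a h b hab))
          (by_contra fun h => hc (hl' a h b hab))
    have aux : ∀ {S S' : Set V}, IsPerfectCode G S → IsPerfectCode G S' → (a ∈ S ↔ a ∈ S') →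
        (∀ c, G.Adj c a → c ≠ b → (c ∈ S ↔ c ∈ S')) → b ∈ S → b ∈ S' := by
      intro S S' hS hS' ha ih hb
      have haS : a ∉ S := fun h => hS.indep a h b hb hab
      obtain ⟨s, hs, has⟩ := hS'.exists_adj a fun h => haS (ha.2 h)
      by_cases hsb : s = b
      · exact hsb ▸ hs
      · exact absurd (hS.eq_of_adj a s ((ih s has.symm hsb).2 hs) b hb has hab) hsb
    exact ⟨ha, aux hS hS' ha fun c h1 h2 => (ih c h1 h2).1,
      aux hS' hS ha.symm fun c h1 h2 => (ih c h1 h2).1.symm⟩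
  ext v
  obtain ⟨w, hw⟩ := hnbr v
  exact (key v w hw).1

lemma IsPerfectCode.exists_center {G : SimpleGraph V} {S : Set V} (hS : IsPerfectCode G S) :
    ∃ σ : V → V, (∀ s ∈ S, σ s = s) ∧ (∀ b ∉ S, σ b ∈ S ∧ G.Adj b (σ b)) ∧
      ∀ s ∈ S, ∀ b, G.Adj s b → σ b = s := by
  have hex : ∀ b, ∃ s, s ∈ S ∧ (b ∈ S → s = b) ∧ (b ∉ S → G.Adj b s) := by
    intro b
    by_cases hb : b ∈ S
    · exact ⟨b, hb, fun _ => rfl, fun h => absurd hb h⟩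
    · obtain ⟨s, hs, hbs⟩ := hS.exists_adj b hb
      exact ⟨s, hs, fun h => absurd h hb, fun _ => hbs⟩
  choose σ hσS hσ hadj using hex
  refine ⟨σ, hσ, fun b hb => ⟨hσS b, hadj b hb⟩, fun s hs b hsb => ?_⟩
  exact hS.eq_of_adj b _ (hσS b) s hs (hadj b fun h => hS.indep s hs b h hsb) hsb.symm

lemma IsPerfectCode.ncard_eq_dominationNumber [Finite V] {G : SimpleGraph V} {S : Set V}
    (hS : IsPerfectCode G S) : dominationNumber G = S.ncard := by
  obtain ⟨σ, hσ, -, hσ'⟩ := hS.exists_center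
  exact (dominationNumber_le hS.exists_adj).antisymm
    (ncard_le_dominationNumber σ fun s hs => ⟨s, hσ s hs, hσ' s hs⟩)

/-- The part of the path from `z` to the root edge that is reached by passing from a vertex to its
parent as long as `Q` holds. -/
lemma IsEdgeRooting.exists_chain {G : SimpleGraph V} {u v : V} {par : V → V} {depth : V → ℕ}
    (h : IsEdgeRooting G u v par depth) (huv : u ≠ v) (Q : V → Prop) (z : V) :
    ∃ C : Set V, z ∉ C ∧ ¬ (u ∈ C ∧ v ∈ C) ∧
      (∀ y, y = z ∨ y ∈ C → y ≠ u → y ≠ v → Q y → par y ∈ C) ∧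
      ∀ b ∈ C, ∃ y, (y = z ∨ y ∈ C) ∧ par y = b ∧ Q y := by
  let C : Set V := {y | ∃ k, y = par^[k + 1] z ∧
    ∀ i ≤ k, par^[i] z ≠ u ∧ par^[i] z ≠ v ∧ Q (par^[i] z)}
  refine ⟨C, ?_, ?_, ?_, ?_⟩
  · rintro ⟨k, hk, hi⟩
    have hdepth : ∀ j ≤ k, depth (par^[j + 1] z) < depth z := by
      intro j hj
      induction j with
      | zero => exact h.depth_lt z (hi 0 (Nat.zero_le _)).2.1
      | succ j ih =>
        rw [Function.iterate_succ_apply']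
        exact (h.depth_lt _ (hi (j + 1) hj).2.1).trans (ih (by omega))
    have h1 := hdepth k le_rfl
    rw [← hk] at h1
    exact h1.false
  · rintro ⟨⟨k, hk, hki⟩, ⟨l, hl, hli⟩⟩
    rcases lt_trichotomy k l with hlt | rfl | hlt
    · exact (hli (k + 1) hlt).1 hk.symm
    · exact huv (hk.trans hl.symm)
    · exact (hki (l + 1) hlt).2.1 hl.symm
  · rintro y (rfl | ⟨k, rfl, hk⟩) hu hv hQ
    · refine ⟨0, rfl, fun i hi => ?_⟩
      obtain rfl : i = 0 := by omega
      exact ⟨hu, hv, hQ⟩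
    · refine ⟨k + 1, (Function.iterate_succ_apply' _ _ _).symm, fun i hi => ?_⟩
      rcases Nat.lt_or_ge k i with hki | hki
      · obtain rfl : i = k + 1 := by omega
        exact ⟨hu, hv, hQ⟩
      · exact hk i hki
  · rintro b ⟨k, rfl, hk⟩
    refine ⟨par^[k] z, ?_, (Function.iterate_succ_apply' _ _ _).symm, (hk k le_rfl).2.2⟩
    cases k with
    | zero => exact Or.inl rfl
    | succ k => exact Or.inr ⟨k, rfl, fun i hi => hk i (by omega)⟩

lemma IsPerfectCode.dominationNumber_subdivide_pair_le_of_isEdgeRooting [Finite V]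
    {G : SimpleGraph V} {S : Set V} (hS : IsPerfectCode G S) (hl : ∀ v, IsLeaf G v → v ∈ S)
    {u v : V} {par : V → V} {depth : V → ℕ} (h : IsEdgeRooting G u v par depth) (huv : u ≠ v)
    {z : V} (hzu : z ≠ u) (hzv : z ≠ v) :
    dominationNumber (subdivide G {s(u, v), s(z, par z)}) ≤ S.ncard := by
  classical
  have hl := forall_isLeaf_mem_iff.1 hl
  obtain ⟨σ, hσ, hσS, hσ'⟩ := hS.exists_center
  obtain ⟨C, hzC, huvC, hstep, hinv⟩ :=
    h.exists_chain huv (fun y => ¬ (y ∉ S ∧ par y ∉ S ∧ par (par y) ∉ S)) z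
  have hpu := h.par_left
  have hpv := h.par_right
  set F : Set (Sym2 V) := {s(u, v), s(z, par z)} with hF
  have hFmem : ∀ a, s(a, par a) ∈ F → a = u ∨ a = v ∨ a = z := by
    intro a ha
    by_contra! hne
    simp only [hF, Set.mem_insert_iff, Set.mem_singleton_iff, Sym2.eq_iff] at ha
    rcases ha with (ha | ha) | (ha | ha)
    · exact hne.1 ha.1
    · exact hne.2.1 ha.1
    · exact hne.2.2 ha.1
    · have : par (par a) = a := by rw [ha.2, ha.1]
      rcases h.eq_or_eq_of_par_par this with h1 | h1
      · exact hne.1 h1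
      · exact hne.2.1 h1
  let e : F := ⟨s(u, v), Or.inl rfl⟩
  let f : F := ⟨s(z, par z), Or.inr rfl⟩
  let ρ : V → V ⊕ F := fun s =>
    if s ∈ C then Sum.inl s else if s = z then Sum.inr f
    else if s = u ∨ s = v then Sum.inr e else Sum.inl (par s)
  have hfree : ∀ b, b ∉ S → par b ∉ S → b ∉ C → Sum.inl b ∈ ρ '' S := by
    intro b hb hpb hbC
    obtain ⟨hs, hbs⟩ := hσS b hb
    set s := σ b
    have hpar : par s = b := h.par_eq_of_adj hbs.symm fun h1 => hpb (h1 ▸ hs)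
    have hsu : s ≠ u := fun h1 => hpb (by rw [← hpar, h1, hpu, hpv, ← h1]; exact hs)
    have hsv : s ≠ v := fun h1 => hpb (by rw [← hpar, h1, hpv, hpu, ← h1]; exact hs)
    have hsC : ¬ (s = z ∨ s ∈ C) := fun h1 =>
      hbC (hpar ▸ hstep s h1 hsu hsv fun h2 => h2.1 hs)
    rw [not_or] at hsC
    exact ⟨s, hs, by simp [ρ, hsC, hsu, hsv, hpar]⟩
  have hdom : IsDominating (subdivide G F) (ρ '' S) := by
    have hx : ∀ x, (x ∈ ρ '' S ∨ ∃ y ∈ ρ '' S, (subdivide G F).Adj x y) →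
        x ∉ ρ '' S → ∃ y ∈ ρ '' S, (subdivide G F).Adj x y := fun x h1 h2 => h1.resolve_left h2
    rintro (b | ⟨g, rfl | rfl⟩) <;> apply hx
    · by_cases hb : b ∈ S
      · by_cases hbC : b ∈ C
        · exact Or.inl ⟨b, hb, by simp [ρ, hbC]⟩
        · refine Or.inr ⟨ρ b, ⟨b, hb, rfl⟩, ?_⟩
          by_cases hbz : b = z
          · simp [ρ, hbz, hzC, f]
          by_cases hbuv : b = u ∨ b = v
          · simp [ρ, hbC, hbz, hbuv, e]
          · have h1 : s(b, par b) ∉ F := fun h1 => by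
              rcases hFmem b h1 with h1 | h1 | h1 <;> simp_all
            simp [ρ, hbC, hbz, hbuv, h1, h.adj_par b]
      by_cases hpb : par b ∈ S
      · by_cases hbC : b ∈ C
        · have hbz : b ≠ z := fun h1 => hzC (h1 ▸ hbC)
          by_cases hbuv : b = u ∨ b = v
          · refine Or.inr ⟨ρ (par b), ⟨_, hpb, rfl⟩, ?_⟩
            have hpC : par b ∉ C := by
              rcases hbuv with rfl | rfl
              · rw [hpu]; exact fun h1 => huvC ⟨hbC, h1⟩
              · rw [hpv]; exact fun h1 => huvC ⟨h1, hbC⟩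
            have hpuv : par b = u ∨ par b = v := by
              rcases hbuv with rfl | rfl
              · exact Or.inr hpu
              · exact Or.inl hpv
            have hpz : par b ≠ z := by
              rcases hpuv with h1 | h1 <;> rw [h1]
              · exact hzu.symm
              · exact hzv.symm
            simp [ρ, hpC, hpz, hpuv, e, hbuv]
          · rw [not_or] at hbuv
            have hpC : par b ∈ C := hstep b (Or.inr hbC) hbuv.1 hbuv.2 fun h1 => h1.2.1 hpb
            refine Or.inr ⟨ρ (par b), ⟨_, hpb, rfl⟩, ?_⟩
            have h1 : s(b, par b) ∉ F := fun h1 => by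
              rcases hFmem b h1 with h1 | h1 | h1 <;> simp_all
            simp [ρ, hpC, h1, h.adj_par b]
        · obtain ⟨c, hcp, hbc⟩ := hl b hb _ (h.adj_par b)
          have hpc : par c = b := h.par_eq_of_adj hbc.symm hcp
          have hcS : c ∉ S := fun h1 => hcp (hS.eq_of_adj b c h1 _ hpb hbc (h.adj_par b))
          have hcu : c ≠ u := fun h1 => hcp (by rw [← hpc, h1, hpu, hpv])
          have hcv : c ≠ v := fun h1 => hcp (by rw [← hpc, h1, hpv, hpu])
          have hcC : ¬ (c = z ∨ c ∈ C) := fun h1 =>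
            hbC (hpc ▸ hstep c h1 hcu hcv fun h2 => h2.2.2 (by rw [hpc]; exact hpb))
          rw [not_or] at hcC
          refine Or.inr ⟨_, hfree c hcS (by rwa [hpc]) hcC.2, ?_⟩
          have h1 : s(b, c) ∉ F := fun h1 => by
            rw [Sym2.eq_swap, ← hpc] at h1
            rcases hFmem c h1 with h1 | h1 | h1 <;> simp_all
          simp [h1, hbc]
      · by_cases hbC : b ∈ C
        · obtain ⟨y, hy, rfl, hQ⟩ := hinv b hbC
          have hyS : y ∈ S := by
            by_contra hyS
            exact hQ ⟨hyS, hb, hpb⟩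
          refine Or.inr ⟨ρ y, ⟨y, hyS, rfl⟩, ?_⟩
          by_cases hyz : y = z
          · subst hyz
            simp [ρ, hzC, f]
          · have hyC := hy.resolve_left hyz
            have h1 : s(y, par y) ∉ F := fun h1 => by
              rcases hFmem y h1 with h1 | h1 | h1
              · exact hpb (by rw [h1, hpu, hpv, ← h1]; exact hyS)
              · exact hpb (by rw [h1, hpv, hpu, ← h1]; exact hyS)
              · exact hyz h1
            rw [Sym2.eq_swap] at h1
            simp [ρ, hyC, h1, (h.adj_par y).symm]
        · exact Or.inl (hfree b hb hpb hbC)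
    · by_cases huS : u ∈ S
      · by_cases huC : u ∈ C
        · exact Or.inr ⟨ρ u, ⟨u, huS, rfl⟩, by simp [ρ, huC]⟩
        · exact Or.inl ⟨u, huS, by simp [ρ, huC, hzu.symm, e]⟩
      by_cases hvS : v ∈ S
      · by_cases hvC : v ∈ C
        · exact Or.inr ⟨ρ v, ⟨v, hvS, rfl⟩, by simp [ρ, hvC]⟩
        · exact Or.inl ⟨v, hvS, by simp [ρ, hvC, hzv.symm, e]⟩
      by_cases huC : u ∈ C
      · exact Or.inr ⟨_, hfree v hvS (by rwa [hpv]) fun h1 => huvC ⟨huC, h1⟩, by simp⟩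
      · exact Or.inr ⟨_, hfree u huS (by rwa [hpu]) huC, by simp⟩
    · by_cases hzS : z ∈ S
      · exact Or.inl ⟨z, hzS, by simp [ρ, hzC, f]⟩
      by_cases hpS : par z ∈ S
      · have hpC : par z ∈ C := hstep z (Or.inl rfl) hzu hzv fun h1 => h1.2.1 hpS
        exact Or.inr ⟨ρ (par z), ⟨_, hpS, rfl⟩, by simp [ρ, hpC]⟩
      · exact Or.inr ⟨_, hfree z hzS hpS hzC, by simp⟩
  exact (dominationNumber_le hdom).trans (Set.ncard_image_le (Set.toFinite S))

/-- Subdividing at most two edges of a tree with a perfect code containing all leaves does not raise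
the domination number. -/
lemma IsPerfectCode.dominationNumber_subdivide_le [Fintype V] {G : SimpleGraph V} (hG : G.IsTree)
    (h3 : 3 ≤ Fintype.card V) {S : Set V} (hS : IsPerfectCode G S)
    (hl : ∀ v, IsLeaf G v → v ∈ S) {F : Set (Sym2 V)} (hF : F ⊆ G.edgeSet) (hcard : F.ncard ≤ 2) :
    dominationNumber (subdivide G F) ≤ dominationNumber G := by
  classical
  have hE : 2 ≤ G.edgeSet.ncard := by
    have := hG.card_edgeFinset
    rw [Set.ncard_eq_toFinset_card', ← edgeFinset]
    omega
  obtain ⟨F', hFF', hF', hcard'⟩ :=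
    Set.exists_subsuperset_card_eq hF hcard hE
  obtain ⟨e, f, hef, rfl⟩ := Set.ncard_eq_two.1 hcard'
  refine (dominationNumber_subdivide_mono hFF' hF').trans ?_
  rw [hS.ncard_eq_dominationNumber]
  have he : e ∈ G.edgeSet := hF' (Or.inl rfl)
  have hf : f ∈ G.edgeSet := hF' (Or.inr rfl)
  induction e with | _ u v
  induction f with | _ a b
  obtain ⟨par, depth, h⟩ := exists_isEdgeRooting (u := u) (v := v) hG he
  have key : ∀ a, s(u, v) ≠ s(a, par a) →
      dominationNumber (subdivide G {s(u, v), s(a, par a)}) ≤ S.ncard := by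
    intro a ha
    refine hS.dominationNumber_subdivide_pair_le_of_isEdgeRooting hl h (Adj.ne he) ?_ ?_
    · rintro rfl
      exact ha (by rw [h.par_left])
    · rintro rfl
      exact ha (by rw [h.par_right, Sym2.eq_swap])
  rcases (h.adj_iff a b).1 hf with rfl | rfl
  · exact key a hef
  · rw [Sym2.eq_swap (a := par b)] at hef ⊢
    exact key b hef

/-- Subdividing the three edges of a suitable path between two elements of a perfect code raises the
domination number. -/
lemma IsPerfectCode.exists_lt_dominationNumber_subdivide [Finite V] [Nontrivial V]
    {G : SimpleGraph V} (hG : G.IsTree) {S : Set V} (hS : IsPerfectCode G S)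
    (hl : ∀ v, IsLeaf G v → v ∈ S) :
    ∃ F ⊆ G.edgeSet, F.ncard = 3 ∧ dominationNumber G < dominationNumber (subdivide G F) := by
  classical
  have hl := forall_isLeaf_mem_iff.1 hl
  obtain ⟨σ, hσ, hσS, hσ'⟩ := hS.exists_center
  have hnbr : ∀ v, ∃ w, G.Adj v w := fun v => hG.connected.preconnected.exists_adj_of_nontrivial v
  obtain ⟨s, hs⟩ : ∃ s, s ∈ S := by
    by_contra! hno
    exact hno _ (hσS (Classical.arbitrary V) (hno _)).1
  obtain ⟨b, hsb⟩ := hnbr s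
  have hb : b ∉ S := fun h => hS.indep s hs b h hsb
  obtain ⟨c, hcs, hbc⟩ := hl b hb s hsb.symm
  have hc : c ∉ S := fun h => hcs (hS.eq_of_adj b c h s hs hbc hsb.symm)
  obtain ⟨hs', hcs'⟩ := hσS c hc
  have hσb : σ b = s := hσ' s hs b hsb
  obtain ⟨s', hss'⟩ : ∃ s', σ c = s' := ⟨_, rfl⟩
  rw [hss'] at hs' hcs'
  have hne : s' ≠ s := by
    rintro rfl
    obtain ⟨par, depth, h⟩ := exists_isEdgeRooting hG hsb
    have h1 := h.par_left
    have h2 := h.par_right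
    have h5 := (h.adj_iff _ _).1 hbc
    have h6 := (h.adj_iff _ _).1 hcs'
    have h7 := hbc.ne
    grind
  have hsb_ne : s ≠ b := hsb.ne
  have hbc_ne : b ≠ c := hbc.ne
  have hcs'_ne : c ≠ s' := hcs'.ne
  have hbs' : b ≠ s' := by
    rintro rfl
    exact hb hs'
  set F : Set (Sym2 V) := {s(s, b), s(b, c), s(c, s')} with hF
  refine ⟨F, ?_, ?_, ?_⟩
  · rintro e (rfl | rfl | rfl)
    · exact hsb
    · exact hbc
    · exact hcs'
  · refine Set.ncard_eq_three.2 ⟨_, _, _, ?_, ?_, ?_, rfl⟩ <;>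
      simp only [ne_eq, Sym2.eq_iff] <;> grind
  let owner : V ⊕ F → Option V := Sum.elim
    (fun y => if y = b ∨ y = c then none else some (σ y))
    (fun e => if e.val = s(b, c) then none else if e.val = s(s, b) then some s else some s')
  have hcard : (insert none (some '' S)).ncard = S.ncard + 1 := by
    rw [Set.ncard_insert_of_notMem (by simp) (Set.toFinite _),
      Set.ncard_image_of_injective _ (Option.some_injective V)]
  rw [hS.ncard_eq_dominationNumber, ← Nat.add_one_le_iff, ← hcard]
  refine ncard_le_dominationNumber owner ?_
  rintro _ (rfl | ⟨a, ha, rfl⟩)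
  · refine ⟨Sum.inr ⟨s(b, c), by simp [hF]⟩, by simp [owner], ?_⟩
    rintro (q | e) hq
    · simp only [subdivide_adj_inr_inl, Sym2.mem_iff] at hq
      simp [owner, hq]
    · exact absurd hq not_subdivide_adj_inr_inr
  · have hab : a ≠ b := fun h => hb (h ▸ ha)
    have hac : a ≠ c := fun h => hc (h ▸ ha)
    refine ⟨Sum.inl a, by simp [owner, hab, hac, hσ a ha], ?_⟩
    rintro (q | ⟨e, rfl | rfl | rfl⟩) hq
    · rw [subdivide_adj_inl_inl] at hq
      have hσq := hσ' a ha q hq.1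
      have hqb : q ≠ b := by
        rintro rfl
        rw [hσb] at hσq
        exact hq.2 (by simp [hF, hσq])
      have hqc : q ≠ c := by
        rintro rfl
        rw [hss'] at hσq
        exact hq.2 (by simp [hF, hσq, Sym2.eq_swap])
      simp [owner, hqb, hqc, hσq]
    · simp only [subdivide_adj_inl_inr, Sym2.mem_iff, hab, or_false] at hq
      simp [owner, hq, Ne.symm hcs, hsb_ne]
    · simp [hab, hac] at hq
    · simp only [subdivide_adj_inl_inr, Sym2.mem_iff, hac, false_or] at hq
      have h1 : s(c, s') ≠ s(b, c) := by simp only [ne_eq, Sym2.eq_iff]; grind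
      have h2 : s(c, s') ≠ s(s, b) := by simp only [ne_eq, Sym2.eq_iff]; grind
      simp [owner, hq, h1, h2]

/-- A finite tree `T` with at least three vertices has domination
subdivision number 3 if and only if `T` has a unique dominating 2-packing containing
all its leaves. -/
theorem sd_eq_three_iff_uniquePacking {V : Type u} [Fintype V]
    (T : SimpleGraph V) (hT : T.IsTree) (h3 : 3 ≤ Fintype.card V) :
    sd T = 3 ↔
      ∃! S : Set V, IsDominating T S ∧ Is2Packing T S ∧
        ∀ v : V, IsLeaf T v → v ∈ S := by
  have : Nontrivial V := Fintype.one_lt_card_iff_nontrivial.1 (by omega)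
  simp only [← and_assoc, ← isPerfectCode_iff]
  constructor
  · intro hsd
    obtain ⟨S, hS, hl⟩ := exists_isPerfectCode hT h3 fun F hF hcard => by
      by_contra! hlt
      have : sd T ≤ F.ncard := Nat.sInf_le ⟨F, hF, rfl, hlt⟩
      omega
    exact ⟨S, ⟨hS, hl⟩, fun S' hS' => hS'.1.eq_of_forall_isLeaf_mem hT hS hS'.2 hl⟩
  · rintro ⟨S, ⟨hS, hl⟩, -⟩
    refine le_antisymm (Nat.sInf_le (hS.exists_lt_dominationNumber_subdivide hT hl)) ?_
    refine le_csInf ⟨3, hS.exists_lt_dominationNumber_subdivide hT hl⟩ ?_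
    rintro k ⟨F, hF, rfl, hlt⟩
    by_contra! hk
    exact (hS.dominationNumber_subdivide_le hT h3 hl hF (by omega)).not_gt hlt

end GenCorona
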